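/- arXiv:2308.03071 — 3 statements merged into one kernel-verified Lean document; each statement's English description precedes it below -/
import Mathlib

section
/- Let d ≥ 2, let C = hO^d be a convex body with h ∈ GL_d(K̃), and let Λ = gR^d be a lattice with g ∈ GL_d(K̃). Then CovRad_C(Λ) = q^{-1}·λ_d(h^{-1}gR^d); that is, sup_{w ∈ K̃^d} inf_{u ∈ Λ} ‖h^{-1}(w − u)‖ = q^{-1}·λ_d(h^{-1}Λ). -/
noncomputable section

open scoped Classical

variable (Fq : Type) [Field Fq] [Fintype Fq]

/-- `K̃ = 𝔽_q((x⁻¹))`, realized as formal Laurent series in `t = x⁻¹`. -/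
abbrev Kt := LaurentSeries Fq

/-- The element `x` of `K̃` (the inverse of the Laurent series variable). -/
def Kx : Kt Fq := HahnSeries.single (-1 : ℤ) 1

/-- Absolute value `|f| = q^{deg f}`, i.e. `q^{-order f}` in terms of `t = x⁻¹`. -/
def Kabs (f : Kt Fq) : ℝ := if f = 0 then 0 else (Fintype.card Fq : ℝ) ^ (-f.order)

/-- The ring embedding of `R = 𝔽_q[x]` into `K̃`. -/
def polyK : Polynomial Fq →+* Kt Fq := (Polynomial.aeval (Kx Fq)).toRingHom

/-- Sup norm on `K̃^d`. -/
def vnorm {d : ℕ} (v : Fin d → Kt Fq) : ℝ := ⨆ i, Kabs Fq (v i)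

/-- The lattice `g·R^d`. -/
def lattice {d : ℕ} (g : Matrix (Fin d) (Fin d) (Kt Fq)) : Set (Fin d → Kt Fq) :=
  {v | ∃ c : Fin d → Polynomial Fq, v = g.mulVec fun j => polyK Fq (c j)}

/-- `i`-th successive minimum of `Λ` with respect to a norm `nrm`: the least `r > 0` such that
`Λ` contains `i` linearly independent vectors of norm at most `r`. -/
def minimaN {d : ℕ} (nrm : (Fin d → Kt Fq) → ℝ) (Λ : Set (Fin d → Kt Fq)) (i : ℕ) : ℝ :=
  sInf {r : ℝ | 0 < r ∧ ∃ v : Fin i → Fin d → Kt Fq,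
    (∀ j, v j ∈ Λ) ∧ LinearIndependent (Kt Fq) v ∧ ∀ j, nrm (v j) ≤ r}

/-- `i`-th successive minimum with respect to the sup norm. -/
def minima {d : ℕ} (Λ : Set (Fin d → Kt Fq)) (i : ℕ) : ℝ := minimaN Fq (vnorm Fq) Λ i

/-- Covering radius of `Λ` with respect to the norm `nrm`. -/
def covRad {d : ℕ} (nrm : (Fin d → Kt Fq) → ℝ) (Λ : Set (Fin d → Kt Fq)) : ℝ :=
  ⨆ w : Fin d → Kt Fq, ⨅ u : Λ, nrm (w - u.1)

/-- Length of the shortest nonzero vector of `Λ`. -/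
def ell {d : ℕ} (Λ : Set (Fin d → Kt Fq)) : ℝ :=
  sInf {r : ℝ | ∃ v ∈ Λ, v ≠ 0 ∧ vnorm Fq v = r}

/-- `Λ` is well rounded: it contains `d` linearly independent vectors of norm `ℓ(Λ)`. -/
def IsWellRounded {d : ℕ} (Λ : Set (Fin d → Kt Fq)) : Prop :=
  ∃ v : Fin d → Fin d → Kt Fq, (∀ j, v j ∈ Λ) ∧ LinearIndependent (Kt Fq) v ∧
    ∀ j, vnorm Fq (v j) = ell Fq Λ

/-- The multiplicative "norm" `N(v) = ∏ |v i|`. -/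
def Nprod {d : ℕ} (v : Fin d → Kt Fq) : ℝ := ∏ i, Kabs Fq (v i)

/-- The Minkowski function `μ(Λ) = sup_w inf_{u ∈ Λ} N(w - u)`. -/
def mink {d : ℕ} (Λ : Set (Fin d → Kt Fq)) : ℝ :=
  ⨆ w : Fin d → Kt Fq, ⨅ u : Λ, Nprod Fq (w - u.1)

lemma q_gt_one : (1:ℝ) < (Fintype.card Fq : ℝ) := by
  exact_mod_cast Fintype.one_lt_card

lemma Kabs_nonneg (f : Kt Fq) : 0 ≤ Kabs Fq f := by
  unfold Kabs
  split_ifs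
  · exact le_rfl
  · positivity

lemma Kabs_zero : Kabs Fq 0 = 0 := by simp [Kabs]

lemma Kabs_pos {f : Kt Fq} (hf : f ≠ 0) : 0 < Kabs Fq f := by
  have := q_gt_one Fq
  unfold Kabs
  rw [if_neg hf]
  positivity

lemma Kabs_mul (f g : Kt Fq) : Kabs Fq (f * g) = Kabs Fq f * Kabs Fq g := by
  have := q_gt_one Fq
  by_cases hf : f = 0
  · simp [hf, Kabs]
  by_cases hg : g = 0
  · simp [hg, Kabs]
  unfold Kabs
  rw [if_neg hf, if_neg hg, if_neg (mul_ne_zero hf hg), HahnSeries.order_mul hf hg, neg_add,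
    zpow_add₀ (by positivity)]

lemma Kabs_le_iff (f : Kt Fq) (m : ℤ) :
    Kabs Fq f ≤ (Fintype.card Fq : ℝ) ^ (-m) ↔ ∀ i < m, f.coeff i = 0 := by
  have hq := q_gt_one Fq
  by_cases hf : f = 0
  · subst hf
    simp only [Kabs_zero]
    constructor
    · intro _ i _; rfl
    · intro _; positivity
  unfold Kabs
  rw [if_neg hf, zpow_le_zpow_iff_right₀ hq, neg_le_neg_iff]
  constructor
  · intro h i hi
    exact HahnSeries.coeff_eq_zero_of_lt_order (lt_of_lt_of_le hi h)
  · intro h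
    by_contra hlt
    push Not at hlt
    exact HahnSeries.coeff_order_eq_zero.not.2 hf (h _ hlt)

lemma Kabs_neg (f : Kt Fq) : Kabs Fq (-f) = Kabs Fq f := by
  unfold Kabs
  simp

lemma Kabs_add_le (f g : Kt Fq) : Kabs Fq (f + g) ≤ max (Kabs Fq f) (Kabs Fq g) := by
  have hq := q_gt_one Fq
  by_cases hf : f = 0
  · simp [hf]
  by_cases hg : g = 0
  · simp [hg]
  have key : Kabs Fq (f + g) ≤ (Fintype.card Fq : ℝ) ^ (-(min f.order g.order)) := by
    rw [Kabs_le_iff]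
    intro i hi
    rw [HahnSeries.coeff_add, HahnSeries.coeff_eq_zero_of_lt_order (lt_of_lt_of_le hi (min_le_left _ _)),
      HahnSeries.coeff_eq_zero_of_lt_order (lt_of_lt_of_le hi (min_le_right _ _)), add_zero]
  refine key.trans ?_
  rcases le_total f.order g.order with h | h
  · rw [min_eq_left h]
    refine le_trans (le_of_eq ?_) (le_max_left _ _)
    simp [Kabs, hf]
  · rw [min_eq_right h]
    refine le_trans (le_of_eq ?_) (le_max_right _ _)
    simp [Kabs, hg]

lemma Kabs_sum_le {ι : Type*} (s : Finset ι) (f : ι → Kt Fq) (B : ℝ) (hB : 0 ≤ B)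
    (h : ∀ i ∈ s, Kabs Fq (f i) ≤ B) : Kabs Fq (∑ i ∈ s, f i) ≤ B :=
  Finset.sum_induction f (fun x => Kabs Fq x ≤ B)
    (fun a b ha hb => (Kabs_add_le Fq a b).trans (max_le ha hb)) (by simpa [Kabs_zero] using hB) h

lemma Kabs_sum_lt {ι : Type*} (s : Finset ι) (f : ι → Kt Fq) (B : ℝ) (hB : 0 < B)
    (h : ∀ i ∈ s, Kabs Fq (f i) < B) : Kabs Fq (∑ i ∈ s, f i) < B :=
  Finset.sum_induction f (fun x => Kabs Fq x < B)
    (fun a b ha hb => (Kabs_add_le Fq a b).trans_lt (max_lt ha hb)) (by simpa [Kabs_zero] using hB) h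

lemma polyK_monomial (n : ℕ) (a : Fq) :
    polyK Fq (Polynomial.C a * Polynomial.X ^ n) = HahnSeries.single (-(n:ℤ)) a := by
  have h1 : (Kx Fq) ^ n = HahnSeries.single (-(n:ℤ)) 1 := by
    unfold Kx
    rw [HahnSeries.single_pow]
    simp
  have h2 : algebraMap Fq (Kt Fq) a = HahnSeries.single (0:ℤ) a := by
    simp [HahnSeries.algebraMap_apply']
  have : polyK Fq (Polynomial.C a * Polynomial.X ^ n) = algebraMap Fq (Kt Fq) a * (Kx Fq) ^ n := by
    simp [polyK]
  rw [this, h1, h2, HahnSeries.single_mul_single]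
  simp

lemma exists_poly_aux (n : ℕ) : ∀ f : Kt Fq, (∀ i : ℤ, i < 1 - (n:ℤ) → f.coeff i = 0) →
    ∃ p : Polynomial Fq, ∀ i < (1:ℤ), (f - polyK Fq p).coeff i = 0 := by
  induction n with
  | zero => intro f hf; exact ⟨0, by simpa using hf⟩
  | succ n ih =>
    intro f hf
    obtain ⟨p, hp⟩ := ih (f - polyK Fq (Polynomial.C (f.coeff (-(n:ℤ))) * Polynomial.X ^ n)) (by
      intro i hi
      rw [polyK_monomial, HahnSeries.coeff_sub, HahnSeries.coeff_single]
      split_ifs with h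
      · rw [h, sub_self]
      · rw [sub_zero]
        apply hf
        push_cast
        omega)
    refine ⟨p + Polynomial.C (f.coeff (-(n:ℤ))) * Polynomial.X ^ n, ?_⟩
    rw [map_add, add_comm, ← sub_sub]
    exact hp

lemma exists_poly (f : Kt Fq) :
    ∃ p : Polynomial Fq, Kabs Fq (f - polyK Fq p) ≤ (Fintype.card Fq : ℝ)⁻¹ := by
  obtain ⟨p, hp⟩ := exists_poly_aux Fq (1 - f.order).toNat f (by
    intro i hi
    apply HahnSeries.coeff_eq_zero_of_lt_order
    omega)
  refine ⟨p, ?_⟩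
  have := (Kabs_le_iff Fq _ 1).2 hp
  simpa using this

lemma Kabs_le_vnorm {d : ℕ} (v : Fin d → Kt Fq) (i : Fin d) : Kabs Fq (v i) ≤ vnorm Fq v :=
  le_ciSup (f := fun i => Kabs Fq (v i)) (Set.finite_range _).bddAbove i

lemma vnorm_nonneg {d : ℕ} (v : Fin d → Kt Fq) : 0 ≤ vnorm Fq v :=
  Real.iSup_nonneg fun i => Kabs_nonneg Fq _

lemma vnorm_le {d : ℕ} (v : Fin d → Kt Fq) (B : ℝ) (hB : 0 ≤ B) (h : ∀ i, Kabs Fq (v i) ≤ B) :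
    vnorm Fq v ≤ B := Real.iSup_le h hB

lemma lattice_sum {d : ℕ} (A : Matrix (Fin d) (Fin d) (Kt Fq)) (v : Fin d → Fin d → Kt Fq)
    (hv : ∀ j, v j ∈ lattice Fq A) (p : Fin d → Polynomial Fq) :
    (∑ j, polyK Fq (p j) • v j) ∈ lattice Fq A := by
  choose c hc using hv
  refine ⟨fun i => ∑ j, p j * c j i, ?_⟩
  have : (fun i => polyK Fq (∑ j, p j * c j i)) =
      ∑ j, polyK Fq (p j) • (fun i => polyK Fq (c j i)) := by
    ext1 i
    simp [Finset.sum_apply]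
  rw [this, Matrix.mulVec_sum]
  refine Finset.sum_congr rfl fun j _ => ?_
  rw [Matrix.mulVec_smul, ← hc j]

lemma zero_mem_lattice {d : ℕ} (A : Matrix (Fin d) (Fin d) (Kt Fq)) : (0 : Fin d → Kt Fq) ∈ lattice Fq A :=
  ⟨0, by ext1 i; simp [Matrix.mulVec, dotProduct]⟩

/-- Upper bound: rounding coefficients in a basis made of lattice vectors. -/
lemma exists_close {d : ℕ} (A : Matrix (Fin d) (Fin d) (Kt Fq)) (v : Fin d → Fin d → Kt Fq)
    (hv : ∀ j, v j ∈ lattice Fq A) (hl : LinearIndependent (Kt Fq) v) (r : ℝ) (hr : 0 < r)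
    (hn : ∀ j, vnorm Fq (v j) ≤ r) (w : Fin d → Kt Fq) :
    ∃ u ∈ lattice Fq A, vnorm Fq (w - u) ≤ (Fintype.card Fq : ℝ)⁻¹ * r := by
  have hq := q_gt_one Fq
  have hs : Submodule.span (Kt Fq) (Set.range v) = ⊤ :=
    hl.span_eq_top_of_card_eq_finrank' (by simp)
  have hw : w ∈ Submodule.span (Kt Fq) (Set.range v) := by rw [hs]; trivial
  obtain ⟨c, hc⟩ := (Submodule.mem_span_range_iff_exists_fun _).1 hw
  choose p hp using fun j => exists_poly Fq (c j)
  refine ⟨_, lattice_sum Fq A v hv p, ?_⟩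
  rw [← hc, ← Finset.sum_sub_distrib]
  refine vnorm_le Fq _ _ (by positivity) fun i => ?_
  rw [Finset.sum_apply]
  refine Kabs_sum_le Fq _ _ _ (by positivity) fun j _ => ?_
  rw [← sub_smul, Pi.smul_apply, smul_eq_mul, Kabs_mul]
  exact mul_le_mul (hp j) ((Kabs_le_vnorm Fq _ i).trans (hn j)) (Kabs_nonneg Fq _) (by positivity)

/-- Vectors close to a multiple of the standard basis are independent. -/
lemma indep_of_close {d : ℕ} (y : Kt Fq) (u : Fin d → Fin d → Kt Fq)
    (hu : ∀ j, vnorm Fq (Pi.single j y - u j) < Kabs Fq y) : LinearIndependent (Kt Fq) u := by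
  rw [Fintype.linearIndependent_iff]
  intro c hc
  by_contra hne
  push Not at hne
  obtain ⟨i0, hi0⟩ := hne
  haveI : Nonempty (Fin d) := ⟨i0⟩
  obtain ⟨i, hi⟩ := Finite.exists_max (fun j => Kabs Fq (c j))
  have hci : 0 < Kabs Fq (c i) := (Kabs_pos Fq hi0).trans_le (hi i0)
  have hy : 0 < Kabs Fq y := (vnorm_nonneg Fq _).trans_lt (hu i)
  have e : c i * y = ∑ j, c j * (Pi.single j y - u j : Fin d → Kt Fq) i := by
    have h2 := congrFun hc i
    simp only [Finset.sum_apply, Pi.smul_apply, smul_eq_mul, Pi.zero_apply] at h2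
    simp only [Pi.sub_apply, mul_sub, Finset.sum_sub_distrib, h2, sub_zero]
    rw [Finset.sum_eq_single i]
    · simp
    · intro b _ hb
      simp [Pi.single_apply, hb.symm]
    · simp
  have : Kabs Fq (c i * y) < Kabs Fq (c i) * Kabs Fq y := by
    rw [e]
    refine Kabs_sum_lt Fq _ _ _ (by positivity) fun j _ => ?_
    rw [Kabs_mul]
    exact (mul_le_mul_of_nonneg_right (hi j) (Kabs_nonneg Fq _)).trans_lt
      (mul_lt_mul_of_pos_left ((Kabs_le_vnorm Fq _ i).trans_lt (hu j)) hci)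
  rw [Kabs_mul] at this
  exact lt_irrefl _ this

lemma minima_le_of_cover {d : ℕ} (A : Matrix (Fin d) (Fin d) (Kt Fq)) (k : ℤ)
    (H : ∀ w : Fin d → Kt Fq, ∃ u ∈ lattice Fq A, vnorm Fq (w - u) < (Fintype.card Fq : ℝ) ^ k) :
    minima Fq (lattice Fq A) d ≤ (Fintype.card Fq : ℝ) ^ k := by
  have hq := q_gt_one Fq
  have hy : Kabs Fq (HahnSeries.single (-k) 1) = (Fintype.card Fq : ℝ) ^ k := by
    simp [Kabs, HahnSeries.order_single]
  set y : Kt Fq := HahnSeries.single (-k) 1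
  choose u hu hn using fun j : Fin d => H (Pi.single j y)
  refine csInf_le ⟨0, fun r hr => hr.1.le⟩ ⟨by positivity, u, hu, ?_, fun j => ?_⟩
  · exact indep_of_close Fq y u (by simpa [hy] using hn)
  · refine vnorm_le Fq _ _ (by positivity) fun i => ?_
    have e : u j i = (Pi.single j y : Fin d → Kt Fq) i + -((Pi.single j y - u j : Fin d → Kt Fq) i) := by
      simp
    rw [e]
    refine (Kabs_add_le Fq _ _).trans (max_le ?_ ?_)
    · rw [Pi.single_apply]
      split_ifs
      · exact hy.le
      · rw [Kabs_zero]; positivity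
    · rw [Kabs_neg]
      exact (Kabs_le_vnorm Fq _ i).trans (hn j).le

lemma covRad_main {d : ℕ} (A : Matrix (Fin d) (Fin d) (Kt Fq)) (hA : IsUnit A.det) :
    covRad Fq (vnorm Fq) (lattice Fq A)
      = (Fintype.card Fq : ℝ)⁻¹ * minima Fq (lattice Fq A) d := by
  have hq := q_gt_one Fq
  have hq0 : (0:ℝ) < Fintype.card Fq := by linarith
  haveI : Nonempty (lattice Fq A) := ⟨⟨0, zero_mem_lattice Fq A⟩⟩
  have hbb : ∀ w : Fin d → Kt Fq,
      BddBelow (Set.range fun u : lattice Fq A => vnorm Fq (w - u.1)) := fun w =>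
    ⟨0, by rintro _ ⟨u, rfl⟩; exact vnorm_nonneg Fq _⟩
  have up : ∀ r ∈ {r : ℝ | 0 < r ∧ ∃ v : Fin d → Fin d → Kt Fq,
      (∀ j, v j ∈ lattice Fq A) ∧ LinearIndependent (Kt Fq) v ∧ ∀ j, vnorm Fq (v j) ≤ r},
      ∀ w : Fin d → Kt Fq,
      (⨅ u : lattice Fq A, vnorm Fq (w - u.1)) ≤ (Fintype.card Fq : ℝ)⁻¹ * r := by
    rintro r ⟨hr, v, hv, hl, hn⟩ w
    obtain ⟨u, hu, h⟩ := exists_close Fq A v hv hl r hr hn w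
    exact (ciInf_le (hbb w) ⟨u, hu⟩).trans h
  have hne : {r : ℝ | 0 < r ∧ ∃ v : Fin d → Fin d → Kt Fq,
      (∀ j, v j ∈ lattice Fq A) ∧ LinearIndependent (Kt Fq) v ∧ ∀ j, vnorm Fq (v j) ≤ r}.Nonempty := by
    refine ⟨1 + ∑ j, vnorm Fq (A.col j), ?_, A.col, ?_, ?_, ?_⟩
    · have := Finset.sum_nonneg (s := Finset.univ) (fun j _ => vnorm_nonneg Fq (A.col j))
      linarith
    · intro j
      refine ⟨Pi.single j 1, ?_⟩
      have : (fun i => polyK Fq ((Pi.single j 1 : Fin d → Polynomial Fq) i)) = Pi.single j 1 := by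
        ext1 i
        by_cases h : i = j
        · subst h; simp
        · simp [Pi.single_apply, h]
      rw [this, Matrix.mulVec_single_one]
    · exact Matrix.linearIndependent_cols_of_isUnit ((Matrix.isUnit_iff_isUnit_det A).2 hA)
    · intro j
      have := Finset.single_le_sum (s := Finset.univ) (f := fun j => vnorm Fq (A.col j))
        (fun j _ => vnorm_nonneg Fq (A.col j)) (Finset.mem_univ j)
      linarith
  have hba : BddAbove (Set.range fun w : Fin d → Kt Fq =>
      ⨅ u : lattice Fq A, vnorm Fq (w - u.1)) := by
    obtain ⟨r, hr⟩ := hne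
    exact ⟨_, by rintro _ ⟨w, rfl⟩; exact up r hr w⟩
  have cover : ∀ k : ℤ, covRad Fq (vnorm Fq) (lattice Fq A) < (Fintype.card Fq : ℝ) ^ k →
      minima Fq (lattice Fq A) d ≤ (Fintype.card Fq : ℝ) ^ k := by
    intro k hk
    apply minima_le_of_cover
    intro w
    obtain ⟨u, hu⟩ := exists_lt_of_ciInf_lt ((le_ciSup hba w).trans_lt hk)
    exact ⟨u.1, u.2, hu⟩
  have h0 : 0 ≤ covRad Fq (vnorm Fq) (lattice Fq A) :=
    Real.iSup_nonneg fun w => Real.iInf_nonneg fun u => vnorm_nonneg Fq _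
  apply le_antisymm
  · rw [← div_eq_inv_mul, le_div_iff₀ hq0]
    refine le_csInf hne fun r hr => ?_
    rw [← le_div_iff₀ hq0, div_eq_inv_mul]
    exact ciSup_le (up r hr)
  · by_contra hlt
    push Not at hlt
    set L := minima Fq (lattice Fq A) d
    have hL : 0 < L := by
      have := h0.trans_lt hlt
      exact pos_of_mul_pos_right this (by positivity)
    obtain ⟨n, hn1, hn2⟩ := exists_mem_Ico_zpow hL hq
    have hLL : (Fintype.card Fq : ℝ)⁻¹ * L < (Fintype.card Fq : ℝ) ^ n := by
      rw [← div_eq_inv_mul, div_lt_iff₀ hq0, ← zpow_add_one₀ hq0.ne']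
      exact hn2
    have h1 := cover n (hlt.trans hLL)
    have h2 : L = (Fintype.card Fq : ℝ) ^ n := le_antisymm h1 hn1
    have h3 := cover (n - 1) (by
      rw [zpow_sub_one₀ hq0.ne', ← h2, mul_comm]; exact hlt)
    have h4 : (Fintype.card Fq : ℝ) ^ (n - 1) < (Fintype.card Fq : ℝ) ^ n :=
      zpow_lt_zpow_right₀ hq (by omega)
    linarith

lemma covRad_transfer {d : ℕ} (h g : Matrix (Fin d) (Fin d) (Kt Fq)) (hh : IsUnit h.det) :
    covRad Fq (fun v => vnorm Fq (h⁻¹.mulVec v)) (lattice Fq g)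
      = covRad Fq (vnorm Fq) (lattice Fq (h⁻¹ * g)) := by
  unfold covRad
  have hsurj : Function.Surjective (fun w : Fin d → Kt Fq => h⁻¹.mulVec w) := fun w =>
    ⟨h.mulVec w, by simp [Matrix.mulVec_mulVec, Matrix.nonsing_inv_mul h hh]⟩
  rw [← hsurj.iSup_comp (g := fun w => ⨅ u : lattice Fq (h⁻¹ * g), vnorm Fq (w - u.1))]
  refine iSup_congr fun w => ?_
  have hs2 : Function.Surjective (fun u : lattice Fq g =>
      (⟨h⁻¹.mulVec u.1, by
        obtain ⟨c, hc⟩ := u.2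
        exact ⟨c, by rw [hc, Matrix.mulVec_mulVec]⟩⟩ : lattice Fq (h⁻¹ * g))) := by
    rintro ⟨_, c, rfl⟩
    exact ⟨⟨_, c, rfl⟩, Subtype.ext (by simp [Matrix.mulVec_mulVec])⟩
  rw [← hs2.iInf_comp (g := fun u : lattice Fq (h⁻¹ * g) => vnorm Fq (h⁻¹.mulVec w - u.1))]
  refine iInf_congr fun u => ?_
  simp only [Matrix.mulVec_sub]

/-- Covering radius with respect to a convex body `C = hO^d`:
`CovRad_C(Λ) = q⁻¹·λ_d(h⁻¹Λ)`. -/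
theorem covRad_convex_body {d : ℕ} (hd : 2 ≤ d)
    (h g : Matrix (Fin d) (Fin d) (Kt Fq)) (hh : IsUnit h.det) (hg : IsUnit g.det) :
    covRad Fq (fun v => vnorm Fq (h⁻¹.mulVec v)) (lattice Fq g)
      = (Fintype.card Fq : ℝ)⁻¹ * minima Fq (lattice Fq (h⁻¹ * g)) d := by
  rw [covRad_transfer Fq h g hh]
  refine covRad_main Fq _ ?_
  rw [Matrix.det_mul]
  exact (Matrix.isUnit_nonsing_inv_det h hh).mul hg
end
end

section
/- For every unimodular lattice Λ ⊆ K̃^2, μ(Λ) = q^{-2}, where μ(Λ) = sup_{w ∈ K̃^2} inf_{u ∈ Λ} |w₁ − u₁|·|w₂ − u₂|. In particular the Minkowski spectrum in dimension 2, S₂ = {μ(Λ) : Λ a unimodular lattice in K̃^2}, equals {q^{-2}}. -/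
noncomputable section

open scoped Classical

variable (Fq : Type) [Field Fq] [Fintype Fq]

section helpers

/-- `f ∈ t^n O`. -/
def BB {F : Type} [Field F] (n : ℤ) (f : Kt F) : Prop := (n : WithTop ℤ) ≤ f.orderTop

theorem BB_iff {F : Type} [Field F] {n : ℤ} {f : Kt F} :
    BB n f ↔ ∀ k < n, f.coeff k = 0 := by
  unfold BB
  rw [HahnSeries.le_orderTop_iff_forall]
  constructor
  · intro h k hk
    exact h k (by exact_mod_cast hk)
  · intro h k hk
    exact h k (by exact_mod_cast hk)

theorem BB_zero {F : Type} [Field F] (n : ℤ) : BB n (0 : Kt F) := by simp [BB]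

theorem BB_mono {F : Type} [Field F] {m n : ℤ} {f : Kt F} (h : BB n f) (hmn : m ≤ n) : BB m f :=
  le_trans (by exact_mod_cast hmn) h

theorem BB_add {F : Type} [Field F] {n : ℤ} {f g : Kt F} (hf : BB n f) (hg : BB n g) :
    BB n (f + g) :=
  le_trans (le_min hf hg) HahnSeries.min_orderTop_le_orderTop_add

theorem BB_neg {F : Type} [Field F] {n : ℤ} {f : Kt F} (hf : BB n f) : BB n (-f) := by
  unfold BB at *; rwa [HahnSeries.orderTop_neg]

theorem BB_sub {F : Type} [Field F] {n : ℤ} {f g : Kt F} (hf : BB n f) (hg : BB n g) :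
    BB n (f - g) := by
  rw [sub_eq_add_neg]; exact BB_add hf (BB_neg hg)

theorem BB_mul {F : Type} [Field F] {m n k : ℤ} {f g : Kt F} (hf : BB m f) (hg : BB n g)
    (hk : k ≤ m + n) : BB k (f * g) := by
  refine BB_mono ?_ hk
  unfold BB at *
  rw [HahnSeries.orderTop_mul]
  push_cast
  exact add_le_add hf hg

theorem BB_order {F : Type} [Field F] {n : ℤ} {f : Kt F} (hf : f ≠ 0) : BB n f ↔ n ≤ f.order := by
  unfold BB
  rw [← HahnSeries.order_eq_orderTop_of_ne_zero hf]
  exact WithTop.coe_le_coe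

theorem BB_self {F : Type} [Field F] (f : Kt F) : BB f.order f := by
  by_cases hf : f = 0
  · subst hf; exact BB_zero _
  · rw [BB_order hf]

theorem order_inv' {F : Type} [Field F] {f : Kt F} (hf : f ≠ 0) : f⁻¹.order = - f.order := by
  have h := HahnSeries.order_mul hf (inv_ne_zero hf)
  rw [mul_inv_cancel₀ hf, HahnSeries.order_one] at h
  omega

theorem BB_inv {F : Type} [Field F] (f : Kt F) (hf : f ≠ 0) : BB (-f.order) f⁻¹ := by
  rw [← order_inv' hf]; exact BB_self _

theorem BB_of_mul {F : Type} [Field F] {m n : ℤ} {f g : Kt F} (hf : f ≠ 0) (h : BB m (f * g))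
    (hn : n + f.order ≤ m) : BB n g := by
  have : g = f⁻¹ * (f * g) := by field_simp
  rw [this]
  exact BB_mul (BB_inv f hf) h (by omega)

theorem polyK_monomial_s9 (F : Type) [Field F] (n : ℕ) (r : F) :
    polyK F (Polynomial.monomial n r) = HahnSeries.single (-(n : ℤ)) r := by
  have : ∀ n : ℕ, (Kx F) ^ n = HahnSeries.single (-(n : ℤ)) 1 := by
    intro n
    simp [Kx, HahnSeries.single_pow]
  have h2 : polyK F (Polynomial.monomial n r) = algebraMap F (Kt F) r * Kx F ^ n := by
    simp [polyK, Polynomial.aeval_monomial]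
  have h3 : algebraMap F (Kt F) r = HahnSeries.single 0 r := by
    have h4 : algebraMap F (Kt F) r =
        HahnSeries.ofPowerSeries ℤ F (algebraMap F (PowerSeries F) r) := rfl
    rw [h4]
    exact HahnSeries.ofPowerSeries_C r
  rw [h2, this, h3, HahnSeries.single_mul_single, zero_add, mul_one]

theorem polyK_C (F : Type) [Field F] (r : F) :
    polyK F (Polynomial.C r) = HahnSeries.single 0 r := by
  have := polyK_monomial_s9 F 0 r
  simpa using this

theorem polyK_coeff (F : Type) [Field F] (p : Polynomial F) :
    (∀ n : ℕ, (polyK F p).coeff (-(n : ℤ)) = p.coeff n) ∧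
    (∀ k : ℤ, 0 < k → (polyK F p).coeff k = 0) := by
  induction p using Polynomial.induction_on' with
  | add p q hp hq =>
    constructor
    · intro n; simp [hp.1, hq.1]
    · intro k hk; simp [hp.2 k hk, hq.2 k hk]
  | monomial m r =>
    rw [polyK_monomial_s9]
    constructor
    · intro n
      rw [Polynomial.coeff_monomial, HahnSeries.coeff_single]
      simp [eq_comm]
    · intro k hk
      rw [HahnSeries.coeff_single_of_ne]
      omega

theorem polyK_eq_zero {F : Type} [Field F] {p : Polynomial F} (h : BB 1 (polyK F p)) : p = 0 := by
  ext n
  rw [← (polyK_coeff F p).1 n]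
  rw [BB_iff] at h
  simpa using h _ (by omega)

theorem polyK_inj {F : Type} [Field F] {p : Polynomial F} (h : polyK F p = 0) : p = 0 := by
  apply polyK_eq_zero; rw [h]; exact BB_zero _

theorem rounding {F : Type} [Field F] (f : Kt F) : ∃ p : Polynomial F, BB 1 (f - polyK F p) := by
  refine ⟨∑ n ∈ Finset.range ((-f.order).toNat + 1), Polynomial.monomial n (f.coeff (-(n : ℤ))), ?_⟩
  rw [BB_iff]
  intro k hk
  obtain ⟨n, rfl⟩ : ∃ n : ℕ, k = -(n : ℤ) := ⟨(-k).toNat, by omega⟩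
  rw [HahnSeries.coeff_sub, (polyK_coeff F _).1, Polynomial.finsetSum_coeff]
  simp only [Polynomial.coeff_monomial]
  rw [Finset.sum_ite_eq' (Finset.range ((-f.order).toNat + 1)) n (fun n : ℕ => f.coeff (-(n:ℤ)))]
  split_ifs with h
  · simp
  · rw [sub_zero]
    apply HahnSeries.coeff_eq_zero_of_lt_order
    simp at h
    omega

/-- `∃` primitive vector in a box. -/
def SS {F : Type} [Field F] (α β γ δ : Kt F) (a b : ℤ) : Prop :=
  ∃ P Q : Polynomial F, IsCoprime P Q ∧ BB a (α * polyK F P + β * polyK F Q) ∧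
    BB b (γ * polyK F P + δ * polyK F Q)

theorem SS_step {F : Type} [Field F] {α β γ δ : Kt F} (hD : BB 0 (α * δ - β * γ)) {a b : ℤ}
    (hab : a + b ≤ 0) (h : SS α β γ δ a b) : SS α β γ δ (a + 1) b := by
  obtain ⟨P, Q, hPQ, h1, h2⟩ := h
  by_cases h3 : BB (a + 1) (α * polyK F P + β * polyK F Q)
  · exact ⟨P, Q, hPQ, h3, h2⟩
  have hne : α * polyK F P + β * polyK F Q ≠ 0 := by
    intro h0; rw [h0] at h3; exact h3 (BB_zero _)
  have hord : (α * polyK F P + β * polyK F Q).order = a := by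
    rw [BB_order hne] at h1 h3; omega
  obtain ⟨e, f, hef⟩ := hPQ
  obtain ⟨n, hn⟩ := rounding ((α * polyK F (-f) + β * polyK F e) / (α * polyK F P + β * polyK F Q))
  have hdet : P * (e - n * Q) - Q * (-f - n * P) = 1 := by rw [← hef]; ring
  have hu1 : BB (a + 1) (α * polyK F (-f - n * P) + β * polyK F (e - n * Q)) := by
    have := BB_mul (k := a + 1) hn h1 (by omega)
    convert this using 1
    rw [sub_mul, div_mul_cancel₀ _ hne]
    simp only [map_sub, map_mul, map_neg]
    ring
  refine ⟨-f - n * P, e - n * Q, ⟨-Q, P, by rw [← hdet]; ring⟩, hu1, ?_⟩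
  apply BB_of_mul hne (m := a + b) _ (by omega)
  have hdetK := congrArg (polyK F) hdet
  simp only [map_sub, map_mul, map_neg, map_one] at hdetK
  have key : (α * polyK F P + β * polyK F Q) * (γ * polyK F (-f - n * P) + δ * polyK F (e - n * Q))
    = (α * δ - β * γ) + (γ * polyK F P + δ * polyK F Q) *
      (α * polyK F (-f - n * P) + β * polyK F (e - n * Q)) := by
    simp only [map_sub, map_mul, map_neg]
    linear_combination (α * δ - β * γ) * hdetK
  rw [key]
  exact BB_add (BB_mono hD hab) (BB_mul h2 hu1 (by omega))

theorem SS_swap {F : Type} [Field F] {α β γ δ : Kt F} {a b : ℤ} (h : SS α β γ δ a b) :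
    SS γ δ α β b a := by
  obtain ⟨P, Q, h, h1, h2⟩ := h
  exact ⟨P, Q, h, h2, h1⟩

theorem SS_steps {F : Type} [Field F] {α β γ δ : Kt F} (hD : BB 0 (α * δ - β * γ)) (n : ℕ) :
    ∀ {a b : ℤ}, a + n + b ≤ 1 → SS α β γ δ a b → SS α β γ δ (a + n) b := by
  induction n with
  | zero => intro a b _ h; simpa using h
  | succ n ih =>
    intro a b hab h
    push_cast at hab ⊢
    have := SS_step hD (by omega) (ih (by omega) h)
    rwa [add_assoc] at this

theorem SS_all {F : Type} [Field F] {α β γ δ : Kt F} (hD : BB 0 (α * δ - β * γ)) (a : ℤ) :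
    SS α β γ δ a (1 - a) := by
  have hD' : BB 0 (γ * β - δ * α) := by
    have := BB_neg hD
    convert this using 1
    ring
  have h0 : SS α β γ δ (min α.order a) (min γ.order (1 - a)) := by
    refine ⟨1, 0, isCoprime_one_left, ?_, ?_⟩
    · simpa using BB_mono (BB_self α) (min_le_left _ _)
    · simpa using BB_mono (BB_self γ) (min_le_left _ _)
  have h1 : SS α β γ δ a (min γ.order (1 - a)) := by
    have := SS_steps hD (a - min α.order a).toNat (by omega) h0
    convert this using 1
    omega
  have h2 := SS_steps hD' ((1 - a) - min γ.order (1 - a)).toNat (by omega) (SS_swap h1)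
  have h3 := SS_swap h2
  convert h3 using 1
  omega

theorem cramer₁ {L : Type} [Field L] {V1 V2 W1 W2 : L} (h : V1 * W2 - V2 * W1 ≠ 0) (z₁ z₂ : L) :
    z₁ = (z₁ * W2 - z₂ * W1) / (V1 * W2 - V2 * W1) * V1 +
        (V1 * z₂ - V2 * z₁) / (V1 * W2 - V2 * W1) * W1 := by
  rw [div_mul_eq_mul_div, div_mul_eq_mul_div, ← add_div, eq_div_iff h]
  ring

theorem cramer₂ {L : Type} [Field L] {V1 V2 W1 W2 : L} (h : V1 * W2 - V2 * W1 ≠ 0) (z₁ z₂ : L) :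
    z₂ = (z₁ * W2 - z₂ * W1) / (V1 * W2 - V2 * W1) * V2 +
        (V1 * z₂ - V2 * z₁) / (V1 * W2 - V2 * W1) * W2 := by
  rw [div_mul_eq_mul_div, div_mul_eq_mul_div, ← add_div, eq_div_iff h]
  ring

theorem proportional {F : Type} [Field F] {P Q P' Q' : Polynomial F} (h : IsCoprime P Q)
    (h' : IsCoprime P' Q') (hd : P * Q' - Q * P' = 0) :
    ∃ r : F, r ≠ 0 ∧ P' = Polynomial.C r * P ∧ Q' = Polynomial.C r * Q := by
  obtain ⟨e, f, hef⟩ := h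
  have e1 : P' = (e * P' + f * Q') * P := by
    linear_combination (-P') * hef - f * hd
  have e2 : Q' = (e * P' + f * Q') * Q := by
    linear_combination (-Q') * hef + e * hd
  have hu : IsUnit (e * P' + f * Q') :=
    h'.isUnit_of_dvd' (Dvd.intro _ e1.symm) (Dvd.intro _ e2.symm)
  obtain ⟨r, hr, hr'⟩ := Polynomial.isUnit_iff.1 hu
  exact ⟨r, hr.ne_zero, by rw [hr']; exact e1, by rw [hr']; exact e2⟩

theorem det_zero {F : Type} [Field F] {α β γ δ : Kt F} (hD0 : α * δ - β * γ ≠ 0)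
    (hD : (α * δ - β * γ).order = 0) {P Q P' Q' : Polynomial F} {a b c d : ℤ}
    (h1 : BB a (α * polyK F P + β * polyK F Q)) (h2 : BB b (γ * polyK F P + δ * polyK F Q))
    (h3 : BB c (α * polyK F P' + β * polyK F Q')) (h4 : BB d (γ * polyK F P' + δ * polyK F Q'))
    (had : 1 ≤ a + d) (hbc : 1 ≤ b + c) : P * Q' - Q * P' = 0 := by
  apply polyK_eq_zero
  apply BB_of_mul hD0 (m := 1) _ (by omega)
  have key := BB_sub (BB_mul h1 h4 had) (BB_mul h2 h3 hbc)
  convert key using 1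
  simp only [map_sub, map_mul]
  ring

theorem polyK_coeff_C_mul {F : Type} [Field F] (r : F) (f : Kt F) :
    polyK F (Polynomial.C r) * f = r • f := by
  rw [polyK_C, HahnSeries.single_zero_mul_eq_smul]

theorem lin_C {F : Type} [Field F] (α β : Kt F) (r : F) (P Q : Polynomial F) :
    α * polyK F (Polynomial.C r * P) + β * polyK F (Polynomial.C r * Q)
      = r • (α * polyK F P + β * polyK F Q) := by
  rw [← polyK_coeff_C_mul]
  simp only [map_mul]
  ring

theorem orderTop_smul' {F : Type} [Field F] {r : F} (hr : r ≠ 0) (f : Kt F) :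
    (r • f).orderTop = f.orderTop := by
  rw [← polyK_coeff_C_mul, polyK_C, HahnSeries.orderTop_mul, HahnSeries.orderTop_single hr]
  simp

/-- The `F`-linear form attached to a row. -/
def rowL {F : Type} [Field F] (α β : Kt F) : (Polynomial F × Polynomial F) →ₗ[F] Kt F where
  toFun c := α * polyK F c.1 + β * polyK F c.2
  map_add' x y := by simp only [Prod.fst_add, Prod.snd_add, map_add]; ring
  map_smul' r x := by
    simp only [Prod.smul_fst, Prod.smul_snd, Polynomial.smul_eq_C_mul]
    exact lin_C _ _ _ _ _

theorem li_of_inj {F V ι : Type} [Field F] [AddCommGroup V] [Module F V] (c : ι → V)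
    (L : V →ₗ[F] Kt F) (hc : ∀ i, c i ≠ 0)
    (inj : Function.Injective fun i => (L (c i)).orderTop) : LinearIndependent F c := by
  rw [linearIndependent_iff']
  intro s l hsum i hi
  by_contra hli
  have hT : (s.filter fun i => l i ≠ 0).Nonempty := ⟨i, by simp [hi, hli]⟩
  obtain ⟨j, hj, hmin⟩ := Finset.exists_min_image _ (fun i => (L (c i)).orderTop) hT
  rw [Finset.mem_filter] at hj
  have hlt : ∀ k ∈ s, k ≠ j → l k ≠ 0 → (L (c j)).orderTop < (L (c k)).orderTop := by
    intro k hk hkj hlk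
    refine lt_of_le_of_ne (hmin k (by simp [hk, hlk])) ?_
    intro h
    exact hkj (inj h).symm
  by_cases htop : (L (c j)).orderTop = ⊤
  · rw [Finset.sum_eq_single_of_mem j hj.1] at hsum
    · exact (smul_ne_zero hj.2 (hc j)) hsum
    · intro k hk hkj
      by_cases hlk : l k = 0
      · simp [hlk]
      · have := hlt k hk hkj hlk
        rw [htop] at this
        exact absurd this not_top_lt
  · obtain ⟨n, hn⟩ := WithTop.ne_top_iff_exists.1 htop
    have h2 := congrArg (fun v => (L v).coeff n) hsum
    simp only [map_sum, map_smul, map_zero, HahnSeries.coeff_zero] at h2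
    rw [HahnSeries.coeff_sum] at h2
    rw [Finset.sum_eq_single_of_mem j hj.1] at h2
    · rw [HahnSeries.coeff_smul] at h2
      exact (smul_ne_zero hj.2 (HahnSeries.coeff_orderTop_ne hn.symm)) h2
    · intro k hk hkj
      by_cases hlk : l k = 0
      · simp [hlk]
      · have := hlt k hk hkj hlk
        rw [← hn] at this
        rw [HahnSeries.coeff_smul, HahnSeries.coeff_eq_zero_of_lt_orderTop this, smul_zero]

theorem li_functional {F V ι : Type} [Field F] [AddCommGroup V] [Module F V] {c : ι → V}
    (h : LinearIndependent F c) : ∃ ψ : V →ₗ[F] F, ∀ i, ψ (c i) = 1 := by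
  obtain ⟨ψ, hψ⟩ := LinearMap.exists_extend ((Module.Basis.span h).constr F (fun _ => (1 : F)))
  refine ⟨ψ, fun i => ?_⟩
  have h1 := LinearMap.congr_fun hψ (Module.Basis.span h i)
  rw [Module.Basis.constr_basis] at h1
  rw [← h1]
  simp [Module.Basis.span_apply]

theorem residue_dual {F : Type} [Field F] (φ : Polynomial F →ₗ[F] F) :
    ∃ s : Kt F, ∀ p : Polynomial F, (polyK F p * s).coeff 1 = φ p := by
  refine ⟨HahnSeries.single 1 1 * HahnSeries.ofPowerSeries ℤ F
    (PowerSeries.mk fun n => φ (Polynomial.monomial n 1)), fun p => ?_⟩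
  induction p using Polynomial.induction_on' with
  | add p q hp hq => rw [map_add, add_mul, HahnSeries.coeff_add, hp, hq, map_add]
  | monomial n r =>
    rw [polyK_monomial_s9, ← mul_assoc, HahnSeries.single_mul_single, HahnSeries.coeff_single_mul]
    have : (1 : ℤ) - (-(n : ℤ) + 1) = (n : ℤ) := by ring
    rw [this, HahnSeries.ofPowerSeries_apply_coeff, PowerSeries.coeff_mk, mul_one, ← smul_eq_mul,
      ← map_smul, Polynomial.smul_monomial, smul_eq_mul, mul_one]

/-- Core of the upper bound. -/
theorem upper_core {F : Type} [Field F] {α β γ δ : Kt F} (hD0 : α * δ - β * γ ≠ 0)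
    (hD : (α * δ - β * γ).order = 0) (z₁ z₂ : Kt F) :
    ∃ (P Q : Polynomial F) (a : ℤ), BB (1 + a) (z₁ - (α * polyK F P + β * polyK F Q)) ∧
      BB (1 - a) (z₂ - (γ * polyK F P + δ * polyK F Q)) := by
  have hB : BB 0 (α * δ - β * γ) := by rw [BB_order hD0, hD]
  choose P Q hc h1 h2 using fun a => SS_all hB a
  have hex : ∃ a, P a * Q (a + 1) - Q a * P (a + 1) ≠ 0 := by
    by_contra! hcon
    have hs : ∀ a, (α * polyK F (P (a + 1)) + β * polyK F (Q (a + 1))).orderTop =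
        (α * polyK F (P a) + β * polyK F (Q a)).orderTop ∧
        (γ * polyK F (P (a + 1)) + δ * polyK F (Q (a + 1))).orderTop =
        (γ * polyK F (P a) + δ * polyK F (Q a)).orderTop := by
      intro a
      obtain ⟨r, hr, e1, e2⟩ := proportional (hc a) (hc (a + 1)) (hcon a)
      rw [e1, e2, lin_C, lin_C, orderTop_smul' hr, orderTop_smul' hr]
      exact ⟨rfl, rfl⟩
    have hall : ∀ a : ℤ, (α * polyK F (P a) + β * polyK F (Q a)).orderTop =
        (α * polyK F (P 0) + β * polyK F (Q 0)).orderTop ∧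
        (γ * polyK F (P a) + δ * polyK F (Q a)).orderTop =
        (γ * polyK F (P 0) + δ * polyK F (Q 0)).orderTop := by
      intro a
      induction a using Int.induction_on with
      | zero => exact ⟨rfl, rfl⟩
      | succ i ih => rw [(hs i).1, (hs i).2]; exact ih
      | pred i ih =>
        have := hs (-(i : ℤ) - 1)
        rw [sub_add_cancel] at this
        rw [← this.1, ← this.2]; exact ih
    have k1 : ∀ n : ℤ, BB n (α * polyK F (P 0) + β * polyK F (Q 0)) := by
      intro n
      have := h1 n
      unfold BB at *
      rwa [(hall n).1] at this
    have k2 : ∀ n : ℤ, BB n (γ * polyK F (P 0) + δ * polyK F (Q 0)) := by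
      intro n
      have := h2 (1 - n)
      unfold BB at *
      rw [(hall _).2] at this
      simpa using this
    have d1 := det_zero hD0 hD (P' := 1) (Q' := 0) (k1 (1 - γ.order)) (k2 (1 - α.order))
      (c := α.order) (d := γ.order) (by simpa using BB_self α) (by simpa using BB_self γ)
      (by omega) (by omega)
    have d2 := det_zero hD0 hD (P' := 0) (Q' := 1) (k1 (1 - δ.order)) (k2 (1 - β.order))
      (c := β.order) (d := δ.order) (by simpa using BB_self β) (by simpa using BB_self δ)
      (by omega) (by omega)
    have hP : P 0 = 0 := by simpa using d2
    have hQ : Q 0 = 0 := by simpa using d1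
    have := hc 0
    rw [hP, hQ] at this
    exact not_isCoprime_zero_zero this
  obtain ⟨a, ha⟩ := hex
  have v1 := h1 a
  have v2 := BB_mono (h2 a) (show -a ≤ 1 - a by omega)
  have w1 := BB_mono (h1 (a + 1)) (show a ≤ a + 1 by omega)
  have w2 := BB_mono (h2 (a + 1)) (show -a ≤ 1 - (a + 1) by omega)
  have hdet : (α * polyK F (P a) + β * polyK F (Q a)) *
      (γ * polyK F (P (a + 1)) + δ * polyK F (Q (a + 1))) -
      (γ * polyK F (P a) + δ * polyK F (Q a)) *
      (α * polyK F (P (a + 1)) + β * polyK F (Q (a + 1))) ≠ 0 := by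
    have : (α * δ - β * γ) * polyK F (P a * Q (a + 1) - Q a * P (a + 1)) ≠ 0 :=
      mul_ne_zero hD0 (fun h => ha (polyK_inj h))
    convert this using 1
    simp only [map_sub, map_mul]
    ring
  obtain ⟨V1, hV1⟩ : ∃ V, V = α * polyK F (P a) + β * polyK F (Q a) := ⟨_, rfl⟩
  obtain ⟨V2, hV2⟩ : ∃ V, V = γ * polyK F (P a) + δ * polyK F (Q a) := ⟨_, rfl⟩
  obtain ⟨W1, hW1⟩ : ∃ V, V = α * polyK F (P (a + 1)) + β * polyK F (Q (a + 1)) := ⟨_, rfl⟩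
  obtain ⟨W2, hW2⟩ : ∃ V, V = γ * polyK F (P (a + 1)) + δ * polyK F (Q (a + 1)) := ⟨_, rfl⟩
  rw [← hV1, ← hV2, ← hW1, ← hW2] at hdet
  rw [← hV1] at v1
  rw [← hV2] at v2
  rw [← hW1] at w1
  rw [← hW2] at w2
  obtain ⟨p, hp⟩ := rounding ((z₁ * W2 - z₂ * W1) / (V1 * W2 - V2 * W1))
  obtain ⟨r, hr⟩ := rounding ((V1 * z₂ - V2 * z₁) / (V1 * W2 - V2 * W1))
  refine ⟨p * P a + r * P (a + 1), p * Q a + r * Q (a + 1), a, ?_, ?_⟩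
  · have := BB_add (BB_mul (k := 1 + a) hp v1 (by omega)) (BB_mul (k := 1 + a) hr w1 (by omega))
    convert this using 1
    have e : z₁ = (z₁ * W2 - z₂ * W1) / (V1 * W2 - V2 * W1) * V1 +
        (V1 * z₂ - V2 * z₁) / (V1 * W2 - V2 * W1) * W1 := by
      exact cramer₁ hdet z₁ z₂
    simp only [map_add, map_mul]
    linear_combination e + polyK F p * hV1 + polyK F r * hW1
  · have := BB_add (BB_mul (k := 1 - a) hp v2 (by omega)) (BB_mul (k := 1 - a) hr w2 (by omega))
    convert this using 1
    have e : z₂ = (z₁ * W2 - z₂ * W1) / (V1 * W2 - V2 * W1) * V2 +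
        (V1 * z₂ - V2 * z₁) / (V1 * W2 - V2 * W1) * W2 := by
      exact cramer₂ hdet z₁ z₂
    simp only [map_add, map_mul]
    linear_combination e + polyK F p * hV2 + polyK F r * hW2

/-- Core of the lower bound. -/
theorem lower_core {F : Type} [Field F] {α β γ δ : Kt F} (hD0 : α * δ - β * γ ≠ 0)
    (hD : (α * δ - β * γ).order = 0) :
    ∃ z₁ z₂ : Kt F, ∀ (P Q : Polynomial F) (a : ℤ),
      BB (1 + a) (z₁ - (α * polyK F P + β * polyK F Q)) →
      BB (2 - a) (z₂ - (γ * polyK F P + δ * polyK F Q)) → False := by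
  have hB : BB 0 (α * δ - β * γ) := by rw [BB_order hD0, hD]
  choose P Q hc h1 h2 using fun a => SS_all hB a
  have hprop : ∀ a b : ℤ, a ≤ b → (α * polyK F (P a) + β * polyK F (Q a)).orderTop =
      (α * polyK F (P b) + β * polyK F (Q b)).orderTop → P a * Q b - Q a * P b = 0 := by
    intro a b hab h
    have h1' : BB b (α * polyK F (P a) + β * polyK F (Q a)) := by
      have := h1 b
      unfold BB at *
      rwa [h]
    exact det_zero hD0 hD h1' (h2 a) (h1 b) (h2 b) (by omega) (by omega)
  have hprop' : ∀ a b : ℤ, (α * polyK F (P a) + β * polyK F (Q a)).orderTop =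
      (α * polyK F (P b) + β * polyK F (Q b)).orderTop → P a * Q b - Q a * P b = 0 := by
    intro a b h
    rcases le_total a b with hab | hab
    · exact hprop a b hab h
    · linear_combination -(hprop b a hab h.symm)
  obtain ⟨f, hf⟩ : ∃ f : ℤ → WithTop ℤ,
      ∀ a, f a = (α * polyK F (P a) + β * polyK F (Q a)).orderTop := ⟨_, fun _ => rfl⟩
  choose rep hrep using fun r : Set.range f => r.2
  have hli : LinearIndependent F (fun r : Set.range f => (P (rep r), Q (rep r))) := by
    apply li_of_inj _ (rowL α β)
    · intro r h
      rw [Prod.mk_eq_zero] at h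
      have := hc (rep r)
      rw [h.1, h.2] at this
      exact not_isCoprime_zero_zero this
    · intro r r' h
      have h' : (α * polyK F (P (rep r)) + β * polyK F (Q (rep r))).orderTop =
        (α * polyK F (P (rep r')) + β * polyK F (Q (rep r'))).orderTop := h
      rw [← hf, ← hf, hrep, hrep] at h'
      exact Subtype.ext h'
  obtain ⟨ψ, hψ⟩ := li_functional hli
  have hψ' : ∀ a, ψ (P a, Q a) ≠ 0 := by
    intro a
    have e := (hf _).symm.trans ((hrep ⟨f a, a, rfl⟩).trans (hf a))
    obtain ⟨r, hr, e1, e2⟩ := proportional (hc _) (hc a) (hprop' _ a e)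
    have : (P a, Q a) = r • (P (rep ⟨f a, a, rfl⟩), Q (rep ⟨f a, a, rfl⟩)) := by
      rw [Prod.smul_mk, Polynomial.smul_eq_C_mul, Polynomial.smul_eq_C_mul, ← e1, ← e2]
    rw [this, map_smul, hψ]
    simpa using hr
  obtain ⟨s₂, hs₂⟩ := residue_dual (ψ ∘ₗ LinearMap.inl F _ _)
  obtain ⟨s₁, hs₁⟩ := residue_dual (-(ψ ∘ₗ LinearMap.inr F _ _))
  refine ⟨α * s₁ + β * s₂, γ * s₁ + δ * s₂, fun A B a k1 k2 => ?_⟩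
  apply hψ' a
  have hb : BB 2 (polyK F (P a) * (s₂ - polyK F B) - polyK F (Q a) * (s₁ - polyK F A)) := by
    apply BB_of_mul hD0 (m := 2) _ (by omega)
    have := BB_sub (BB_mul (k := 2) (h1 a) k2 (by omega)) (BB_mul (k := 2) (h2 a) k1 (by omega))
    convert this using 1
    ring
  have hz := BB_iff.1 hb 1 (by norm_num)
  have e : polyK F (P a) * (s₂ - polyK F B) - polyK F (Q a) * (s₁ - polyK F A) =
      polyK F (P a) * s₂ - polyK F (Q a) * s₁ - polyK F (P a * B - Q a * A) := by
    simp only [map_sub, map_mul]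
    ring
  rw [e, HahnSeries.coeff_sub, HahnSeries.coeff_sub, hs₁, hs₂, (polyK_coeff F _).2 1 one_pos] at hz
  simp only [LinearMap.neg_apply, LinearMap.comp_apply, LinearMap.inl_apply, LinearMap.inr_apply,
    sub_neg_eq_add, sub_zero] at hz
  rw [← map_add] at hz
  simpa using hz

theorem Kabs_nonneg_s9 (F : Type) [Field F] [Fintype F] (f : Kt F) : 0 ≤ Kabs F f := by
  unfold Kabs
  split_ifs <;> positivity

theorem Kabs_le_of (F : Type) [Field F] [Fintype F] {n : ℤ} {f : Kt F} (h : BB n f) :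
    Kabs F f ≤ (Fintype.card F : ℝ) ^ (-n) := by
  have hq : (1 : ℝ) < (Fintype.card F : ℝ) := by exact_mod_cast Fintype.one_lt_card
  unfold Kabs
  split_ifs with hf
  · positivity
  · rw [BB_order hf] at h
    exact zpow_le_zpow_right₀ hq.le (by omega)

end helpers

/-- In dimension `2`, the Minkowski function is constant:
`μ(Λ) = q^{-2}` for every unimodular lattice `Λ ⊆ K̃²`. In particular `S₂ = {q^{-2}}`. -/
theorem mink_dim_two (g : Matrix (Fin 2) (Fin 2) (Kt Fq)) (hg : Kabs Fq g.det = 1) :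
    mink Fq (lattice Fq g) = (Fintype.card Fq : ℝ) ^ (-2 : ℤ) := by
  have hq : (1 : ℝ) < (Fintype.card Fq : ℝ) := by exact_mod_cast Fintype.one_lt_card
  have hq0 : (0 : ℝ) < (Fintype.card Fq : ℝ) := by linarith
  have hdet : g.det ≠ 0 := by
    intro h
    simp [Kabs, h] at hg
  have hord : g.det.order = 0 := by
    rw [Kabs, if_neg hdet] at hg
    have := (zpow_eq_one_iff_right₀ hq0.le hq.ne').1 hg
    omega
  rw [Matrix.det_fin_two] at hdet hord
  have hmv : ∀ c : Fin 2 → Polynomial Fq,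
      (g.mulVec fun j => polyK Fq (c j)) 0
        = g 0 0 * polyK Fq (c 0) + g 0 1 * polyK Fq (c 1) ∧
      (g.mulVec fun j => polyK Fq (c j)) 1
        = g 1 0 * polyK Fq (c 0) + g 1 1 * polyK Fq (c 1) := by
    intro c
    simp [Matrix.mulVec, dotProduct, Fin.sum_univ_two]
  have hnn : ∀ v : Fin 2 → Kt Fq, 0 ≤ Nprod Fq v :=
    fun v => Finset.prod_nonneg fun i _ => Kabs_nonneg_s9 Fq _
  have hbb : ∀ w : Fin 2 → Kt Fq,
      BddBelow (Set.range fun u : lattice Fq g => Nprod Fq (w - u.1)) := by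
    intro w
    refine ⟨0, ?_⟩
    rintro _ ⟨u, rfl⟩
    exact hnn _
  have hup : ∀ w : Fin 2 → Kt Fq, (⨅ u : lattice Fq g, Nprod Fq (w - u.1))
      ≤ (Fintype.card Fq : ℝ) ^ (-2 : ℤ) := by
    intro w
    obtain ⟨P, Q, a, h1, h2⟩ := upper_core hdet hord (w 0) (w 1)
    refine (ciInf_le (hbb w) ⟨_, ![P, Q], rfl⟩).trans ?_
    rw [Nprod, Fin.prod_univ_two]
    simp only [Pi.sub_apply]
    rw [(hmv _).1, (hmv _).2]
    have e : (Fintype.card Fq : ℝ) ^ (-2 : ℤ) =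
        (Fintype.card Fq : ℝ) ^ (-(1 + a)) * (Fintype.card Fq : ℝ) ^ (-(1 - a)) := by
      rw [← zpow_add₀ hq0.ne']
      congr 1
      ring
    rw [e]
    exact mul_le_mul (Kabs_le_of Fq h1) (Kabs_le_of Fq h2) (Kabs_nonneg_s9 Fq _) (by positivity)
  apply le_antisymm
  · exact ciSup_le hup
  · obtain ⟨z₁, z₂, hz⟩ := lower_core hdet hord
    refine le_trans ?_ (le_ciSup (f := fun w : Fin 2 → Kt Fq =>
      ⨅ u : lattice Fq g, Nprod Fq (w - u.1)) ⟨_, by rintro _ ⟨w, rfl⟩; exact hup w⟩ ![z₁, z₂])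
    have : Nonempty (lattice Fq g) := ⟨⟨_, 0, rfl⟩⟩
    apply le_ciInf
    rintro ⟨u, c, rfl⟩
    rw [Nprod, Fin.prod_univ_two]
    simp only [Pi.sub_apply]
    rw [(hmv _).1, (hmv _).2]
    simp only [Matrix.cons_val_zero, Matrix.cons_val_one]
    have hz' := hz (c 0) (c 1)
    by_contra! hlt
    generalize z₁ - (g 0 0 * polyK Fq (c 0) + g 0 1 * polyK Fq (c 1)) = A at hz' hlt
    generalize z₂ - (g 1 0 * polyK Fq (c 0) + g 1 1 * polyK Fq (c 1)) = B at hz' hlt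
    by_cases hA : A = 0
    · subst hA
      exact hz' (2 - B.order) (BB_zero _) (BB_mono (BB_self B) (by omega))
    · by_cases hB : B = 0
      · subst hB
        exact hz' (A.order - 1) (BB_mono (BB_self A) (by omega)) (BB_zero _)
      · refine hz' (A.order - 1) (BB_mono (BB_self A) (by omega)) (BB_mono (BB_self B) ?_)
        rw [Kabs, Kabs, if_neg hA, if_neg hB, ← zpow_add₀ hq0.ne', zpow_lt_zpow_iff_right₀ hq] at hlt
        omega
end
end

section
/- Let d ≥ 2. For every unimodular lattice Λ ⊆ K̃^d there exists a diagonal matrix a = diag(a₁,…,a_d) with a₁,…,a_d ∈ K̃^* and a₁⋯a_d = 1 (i.e. a ∈ A, the diagonal subgroup of SL_d(K̃)) such that aΛ is well rounded; that is, every A-orbit of unimodular lattices contains a well rounded lattice. -/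
noncomputable section

open scoped Classical

variable (Fq : Type) [Field Fq] [Fintype Fq]

section helpers

variable {Fq}

set_option linter.unusedSectionVars false

/-- order at least `n` -/
def OO (n : ℤ) (f : Kt Fq) : Prop := ∀ k < n, f.coeff k = 0

lemma OO_iff (n : ℤ) (f : Kt Fq) : OO n f ↔ (n : WithTop ℤ) ≤ f.orderTop := by
  rw [HahnSeries.le_orderTop_iff_forall]
  simp [OO]

lemma OO_mono {n m : ℤ} (h : n ≤ m) {f : Kt Fq} (hf : OO m f) : OO n f :=
  fun k hk => hf k (lt_of_lt_of_le hk h)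

lemma OO_mul {n m : ℤ} {f g : Kt Fq} (hf : OO n f) (hg : OO m g) : OO (n + m) (f * g) := by
  rw [OO_iff] at *
  push_cast
  exact (add_le_add hf hg).trans HahnSeries.orderTop_add_le_mul

lemma OO_sum {ι : Type} (s : Finset ι) {n : ℤ} {f : ι → Kt Fq} (hf : ∀ i ∈ s, OO n (f i)) :
    OO n (∑ i ∈ s, f i) := by
  intro k hk
  rw [HahnSeries.coeff_sum]
  exact Finset.sum_eq_zero fun i hi => hf i hi k hk

lemma OO_exists (f : Kt Fq) : ∃ M : ℕ, OO (-(M : ℤ)) f := by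
  refine ⟨(-f.order).toNat, fun k hk => HahnSeries.coeff_eq_zero_of_lt_order ?_⟩
  omega

lemma OO_exists_mat {d : ℕ} (g : Matrix (Fin d) (Fin d) (Kt Fq)) :
    ∃ M : ℕ, ∀ i j, OO (-(M : ℤ)) (g i j) := by
  choose M hM using fun i j => OO_exists (g i j)
  refine ⟨∑ i, ∑ j, M i j, fun i j => OO_mono ?_ (hM i j)⟩
  have h1 : M i j ≤ ∑ j, M i j := Finset.single_le_sum (f := fun j => M i j) (by simp) (by simp)
  have h2 : ∑ j, M i j ≤ ∑ i, ∑ j, M i j :=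
    Finset.single_le_sum (f := fun i => ∑ j, M i j) (by simp) (by simp)
  omega

lemma OO_mulVec {d : ℕ} {g : Matrix (Fin d) (Fin d) (Kt Fq)} {n m : ℤ}
    (hg : ∀ i j, OO n (g i j)) {v : Fin d → Kt Fq} (hv : ∀ j, OO m (v j)) (i : Fin d) :
    OO (n + m) (g.mulVec v i) := by
  exact OO_sum _ fun j _ => OO_mul (hg i j) (hv j)

lemma algK (a : Fq) : algebraMap Fq (Kt Fq) a = HahnSeries.C a := by
  rw [HahnSeries.algebraMap_apply', PowerSeries.algebraMap_apply]
  simp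

lemma Kx_pow (k : ℕ) : Kx Fq ^ k = HahnSeries.single (-(k : ℤ)) 1 := by
  simp [Kx, HahnSeries.single_pow]

lemma coeff_polyK (p : Polynomial Fq) (n : ℤ) :
    (polyK Fq p).coeff n = if n ≤ 0 then p.coeff (-n).toNat else 0 := by
  induction p using Polynomial.induction_on' with
  | add p q hp hq =>
    rw [map_add, HahnSeries.coeff_add, hp, hq]
    split_ifs <;> simp
  | monomial k a =>
    have : polyK Fq (Polynomial.monomial k a) = HahnSeries.single (-(k : ℤ)) a := by
      change Polynomial.aeval (Kx Fq) _ = _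
      rw [Polynomial.aeval_monomial, Kx_pow, algK]
      simp [HahnSeries.C_apply]
    rw [this, HahnSeries.coeff_single, Polynomial.coeff_monomial]
    split_ifs <;> first | rfl | (exfalso; omega)

lemma polyK_eq_zero_s11 {p : Polynomial Fq} (h : OO 1 (polyK Fq p)) : p = 0 := by
  ext k
  have := h (-(k : ℤ)) (by omega)
  rw [coeff_polyK] at this
  simpa using this

lemma exists_poly_approx (t : Kt Fq) : ∃ p : Polynomial Fq, OO 1 (t - polyK Fq p) := by
  obtain ⟨M, hM⟩ := OO_exists t
  refine ⟨∑ k ∈ Finset.range (M + 1), Polynomial.monomial k (t.coeff (-(k : ℤ))), fun n hn => ?_⟩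
  rw [HahnSeries.coeff_sub, coeff_polyK, if_pos (by omega), Polynomial.finsetSum_coeff]
  simp only [Polynomial.coeff_monomial, Finset.sum_ite_eq', Finset.mem_range]
  split_ifs with h
  · rw [Int.toNat_of_nonneg (by omega)]; simp
  · rw [hM n (by omega)]; simp

lemma exists_powerSeries {f : Kt Fq} (hf : OO 0 f) :
    ∃ p : PowerSeries Fq, HahnSeries.ofPowerSeries ℤ Fq p = f ∧
      PowerSeries.constantCoeff p = f.coeff 0 := by
  refine ⟨PowerSeries.mk fun n => f.coeff n, ?_, by simp [← PowerSeries.coeff_zero_eq_constantCoeff_apply]⟩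
  ext n
  rw [PowerSeries.coeff_coe]
  split_ifs with h
  · exact (hf n h).symm
  · simp [abs_of_nonneg (not_lt.1 h)]

lemma OO_ofPowerSeries (p : PowerSeries Fq) : OO 0 (HahnSeries.ofPowerSeries ℤ Fq p) := by
  intro n hn
  rw [PowerSeries.coeff_coe, if_pos hn]

/-- The set of boxes containing no nonzero lattice vector. -/
def Good {d : ℕ} (g : Matrix (Fin d) (Fin d) (Kt Fq)) (n : Fin d → ℤ) : Prop :=
  ∀ c : Fin d → Polynomial Fq,
    (∀ i, OO (n i + 1) (g.mulVec (fun j => polyK Fq (c j)) i)) → c = 0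

lemma exists_good {d : ℕ} (g : Matrix (Fin d) (Fin d) (Kt Fq)) (hg : g.det ≠ 0) :
    ∃ n, Good g n := by
  obtain ⟨M, hM⟩ := OO_exists_mat g⁻¹
  refine ⟨fun _ => M, fun c hc => ?_⟩
  have h2 : g⁻¹.mulVec (g.mulVec fun j => polyK Fq (c j)) = fun j => polyK Fq (c j) := by
    rw [Matrix.mulVec_mulVec, Matrix.nonsing_inv_mul _ (isUnit_iff_ne_zero.2 hg),
      Matrix.one_mulVec]
  ext1 i
  apply polyK_eq_zero_s11
  have := OO_mulVec hM hc i
  rw [h2] at this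
  simpa using this

lemma good_bdd {d : ℕ} (g : Matrix (Fin d) (Fin d) (Kt Fq)) :
    ∃ B : ℤ, ∀ n, Good g n → B ≤ ∑ i, n i := by
  obtain ⟨M, hM⟩ := OO_exists_mat g
  refine ⟨-(d * (M + 1)), fun n hn => ?_⟩
  obtain ⟨N, hN⟩ : ∃ N : ℕ, ∀ i, 0 ≤ n i + 1 + M + N := by
    refine ⟨∑ i, (n i).natAbs, fun i => ?_⟩
    have h1 : (n i).natAbs ≤ ∑ i, (n i).natAbs :=
      Finset.single_le_sum (f := fun i => (n i).natAbs) (by simp) (by simp)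
    omega
  let P : (Fin d → Fin N → Fq) → Fin d → Polynomial Fq :=
    fun c j => ∑ k : Fin N, Polynomial.monomial (k : ℕ) (c j k)
  have hPc : ∀ c j (k : Fin N), (P c j).coeff k = c j k := by
    intro c j k
    simp [P, Polynomial.finsetSum_coeff, Polynomial.coeff_monomial, Fin.val_inj]
  have hPO : ∀ c j, OO (-(N : ℤ)) (polyK Fq (P c j)) := by
    intro c j k hk
    rw [coeff_polyK, if_pos (by omega)]
    simp only [P, Polynomial.finsetSum_coeff, Polynomial.coeff_monomial]
    refine Finset.sum_eq_zero fun x _ => if_neg ?_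
    have := x.2
    omega
  let L : (Fin d → Fin N → Fq) →ₗ[Fq]
      ((i : Fin d) → Fin (n i + 1 + M + N).toNat → Fq) :=
    { toFun := fun c i k => (g.mulVec (fun j => polyK Fq (P c j)) i).coeff (-M - N + (k : ℕ))
      map_add' := by
        intro a b
        ext i k
        have : (fun j => polyK Fq (P (a + b) j)) =
          (fun j => polyK Fq (P a j)) + fun j => polyK Fq (P b j) := by
          ext1 j
          simp [P, Finset.sum_add_distrib]
        simp only [this, Matrix.mulVec_add]
        simp
      map_smul' := by
        intro r a
        ext i k
        have : (fun j => polyK Fq (P (r • a) j)) =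
          (HahnSeries.C r : Kt Fq) • fun j => polyK Fq (P a j) := by
          ext1 j
          have : P (r • a) j = Polynomial.C r * P a j := by
            simp [P, Finset.mul_sum, Polynomial.C_mul_monomial]
          rw [this, map_mul]
          have : polyK Fq (Polynomial.C r) = HahnSeries.C r := by
            change Polynomial.aeval (Kx Fq) _ = _
            rw [Polynomial.aeval_C, algK]
          rw [this]; rfl
        simp only [this, Matrix.mulVec_smul]
        simp }
  have hinj : Function.Injective L := by
    rw [← LinearMap.ker_eq_bot, LinearMap.ker_eq_bot']
    intro c hc
    have h0 : P c = 0 := by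
      apply hn
      intro i k hk
      by_cases hk2 : k < -M + -N
      · exact OO_mulVec hM (hPO c) i k hk2
      · have := congrFun (congrFun hc i) ⟨(k + M + N).toNat, by have := hN i; omega⟩
        have h3 : (-M - N + ((k + M + N).toNat : ℕ) : ℤ) = k := by omega
        change (g.mulVec (fun j => polyK Fq (P c j)) i).coeff _ = 0 at this
        rwa [h3] at this
    ext j k
    rw [← hPc c j k, h0]; simp
  have := LinearMap.finrank_le_finrank_of_injective hinj
  simp only [Module.finrank_pi_fintype, Module.finrank_self, Finset.sum_const, Finset.card_univ,
    Fintype.card_fin, smul_eq_mul, mul_one] at this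
  have h4 : ((d * N : ℕ) : ℤ) ≤ ∑ i, (n i + 1 + M + N) := by
    refine (Int.ofNat_le.2 this).trans (le_of_eq ?_)
    push_cast
    exact Finset.sum_congr rfl fun i _ => Int.toNat_of_nonneg (hN i)
  simp only [Finset.sum_add_distrib, Finset.sum_const, Finset.card_univ, Fintype.card_fin,
    nsmul_eq_mul] at h4
  push_cast at h4
  linarith

lemma card_gt : (1 : ℝ) < (Fintype.card Fq : ℝ) := by
  exact_mod_cast Fintype.one_lt_card

lemma Kabs_lt_iff {f : Kt Fq} : Kabs Fq f < 1 ↔ OO 1 f := by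
  unfold Kabs
  split_ifs with h
  · simp [h, OO]
  · rw [zpow_lt_one_iff_right₀ card_gt, OO_iff, ← HahnSeries.order_eq_orderTop_of_ne_zero h]
    norm_cast
    omega

lemma Kabs_le_iff_s11 {f : Kt Fq} : Kabs Fq f ≤ 1 ↔ OO 0 f := by
  unfold Kabs
  split_ifs with h
  · simp [h, OO]
  · rw [zpow_le_one_iff_right₀ card_gt, OO_iff, ← HahnSeries.order_eq_orderTop_of_ne_zero h]
    norm_cast
    omega

lemma Kabs_eq_iff {f : Kt Fq} : Kabs Fq f = 1 ↔ f.orderTop = (0 : ℤ) := by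
  unfold Kabs
  split_ifs with h
  · simp [h]
  · rw [zpow_eq_one_iff_right₀ (by positivity) card_gt.ne', ← HahnSeries.order_eq_orderTop_of_ne_zero h]
    norm_cast
    omega

lemma OO_coeff {n : ℤ} {f : Kt Fq} (hf : OO n f) (h : ¬ OO (n + 1) f) : f.coeff n ≠ 0 := by
  intro h0
  apply h
  intro k hk
  rcases eq_or_ne k n with rfl | hne
  · exact h0
  · exact hf k (by omega)

lemma OO_shift (n k : ℤ) (f : Kt Fq) : OO (k - n) (HahnSeries.single (-n) 1 * f) ↔ OO k f := by
  constructor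
  · intro h m hm
    have := h (m - n) (by omega)
    rw [show m - n = m + -n by ring, HahnSeries.coeff_single_mul_add] at this
    simpa using this
  · intro h m hm
    rw [show m = (m + n) + -n by ring, HahnSeries.coeff_single_mul_add, h _ (by omega)]
    simp

lemma exists_minimal {d : ℕ} (g : Matrix (Fin d) (Fin d) (Kt Fq)) (hg : g.det ≠ 0) :
    ∃ n, Good g n ∧ ∀ n', Good g n' → ∑ i, n i ≤ ∑ i, n' i := by
  obtain ⟨B, hB⟩ := good_bdd g
  obtain ⟨n0, h0⟩ := exists_good g hg
  obtain ⟨s, ⟨n, hn, hs⟩, hmin⟩ := Int.exists_least_of_bdd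
    (P := fun s => ∃ n, Good g n ∧ ∑ i, n i = s)
    ⟨B, by rintro z ⟨n, hn, rfl⟩; exact hB n hn⟩ ⟨_, n0, h0, rfl⟩
  exact ⟨n, hn, fun n' hn' => hs ▸ hmin _ ⟨n', hn', rfl⟩⟩

/-- A matrix of power series which is diagonal mod `t` with nonzero diagonal. -/
lemma exists_inv {d : ℕ} (V : Matrix (Fin d) (Fin d) (Kt Fq)) (hV : ∀ i j, OO 0 (V i j))
    (h1 : ∀ i, (V i i).coeff 0 ≠ 0) (h2 : ∀ i j, i ≠ j → (V i j).coeff 0 = 0) :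
    V.det.orderTop = (0 : ℤ) := by
  choose W hW hW0 using fun i j => exists_powerSeries (hV i j)
  have hVW : V = (HahnSeries.ofPowerSeries ℤ Fq).mapMatrix (Matrix.of W) := by
    ext1 i j
    simp [hW]
  have hdet : V.det = HahnSeries.ofPowerSeries ℤ Fq (Matrix.of W).det := by
    rw [hVW, ← RingHom.map_det]
  have hc : PowerSeries.constantCoeff (Matrix.of W).det ≠ 0 := by
    rw [RingHom.map_det]
    have : (PowerSeries.constantCoeff).mapMatrix (Matrix.of W) =
        Matrix.diagonal fun i => (V i i).coeff 0 := by
      ext i j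
      by_cases hij : i = j
      · subst hij; simp [hW0]
      · simp [hW0, Matrix.diagonal_apply_ne _ hij, h2 i j hij]
    rw [this, Matrix.det_diagonal]
    exact Finset.prod_ne_zero_iff.2 fun i _ => h1 i
  apply le_antisymm
  · apply HahnSeries.orderTop_le_of_coeff_ne_zero
    rw [hdet, PowerSeries.coeff_coe]
    simpa using hc
  · rw [← OO_iff, hdet]
    exact OO_ofPowerSeries _

lemma orderTop_single_prod {d : ℕ} (n : Fin d → ℤ) (s : Finset (Fin d)) :
    ∏ i ∈ s, (HahnSeries.single (-n i) 1 : Kt Fq) = HahnSeries.single (-∑ i ∈ s, n i) 1 := by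
  induction s using Finset.induction_on with
  | empty => simp
  | insert a s ha ih =>
    rw [Finset.prod_insert ha, ih, HahnSeries.single_mul_single, Finset.sum_insert ha]
    simp [add_comm]

lemma core {d : ℕ} (g : Matrix (Fin d) (Fin d) (Kt Fq)) (hg : Kabs Fq g.det = 1) :
    ∃ n : Fin d → ℤ, Good g n ∧ ∑ i, n i = 0 ∧ ∃ P : Matrix (Fin d) (Fin d) (Polynomial Fq),
      ∃ V : Matrix (Fin d) (Fin d) (Kt Fq), V.det ≠ 0 ∧ (∀ i j, OO 0 (V i j)) ∧
      (∀ i, ¬ OO 1 (V i i)) ∧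
      ∀ i j, V i j = HahnSeries.single (-n i) 1 * g.mulVec (fun k => polyK Fq (P k j)) i := by
  have hgo := Kabs_eq_iff.1 hg
  have hg0 : g.det ≠ 0 := by
    intro h
    rw [h] at hgo
    simp at hgo
  obtain ⟨n, hn, hmin⟩ := exists_minimal g hg0
  have hex : ∀ j, ∃ c : Fin d → Polynomial Fq, c ≠ 0 ∧
      ∀ i, OO (if i = j then n i else n i + 1) (g.mulVec (fun k => polyK Fq (c k)) i) := by
    intro j
    by_contra hcon
    push Not at hcon
    have hG : Good g (fun i => if i = j then n i - 1 else n i) := by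
      intro c hc
      by_contra hc0
      obtain ⟨i, hi⟩ := hcon c hc0
      apply hi
      have := hc i
      by_cases hij : i = j
      · simpa [hij] using this
      · simpa [hij] using this
    have h1 := hmin _ hG
    have h2 : ∑ i, (if i = j then n i - 1 else n i) < ∑ i, n i := by
      apply Finset.sum_lt_sum
      · intro i _
        split_ifs <;> omega
      · exact ⟨j, Finset.mem_univ _, by simp⟩
    omega
  choose C hC0 hC using hex
  have hdiag : ∀ j, ¬ OO (n j + 1) (g.mulVec (fun k => polyK Fq (C j k)) j) := by
    intro j hj
    apply hC0 j
    apply hn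
    intro i
    by_cases hij : i = j
    · subst hij; exact hj
    · simpa [hij] using hC j i
  let P : Matrix (Fin d) (Fin d) (Polynomial Fq) := Matrix.of fun k j => C j k
  let D : Matrix (Fin d) (Fin d) (Kt Fq) := Matrix.diagonal fun i => HahnSeries.single (-n i) 1
  let V := D * (g * (polyK Fq).mapMatrix P)
  have hV : ∀ i j, V i j = HahnSeries.single (-n i) 1 * g.mulVec (fun k => polyK Fq (P k j)) i := by
    intro i j
    simp only [V, D, Matrix.diagonal_mul]
    rfl
  have hV1 : ∀ i, ¬ OO 1 (V i i) := by
    intro i h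
    rw [hV, show (1 : ℤ) = (n i + 1) - n i by ring, OO_shift] at h
    exact hdiag i h
  have hVij : ∀ i j, i ≠ j → OO 1 (V i j) := by
    intro i j hij
    rw [hV, show (1 : ℤ) = (n i + 1) - n i by ring, OO_shift]
    have := hC j i
    rw [if_neg hij] at this
    exact this
  have hV0 : ∀ i j, OO 0 (V i j) := by
    intro i j
    by_cases hij : i = j
    · subst hij
      rw [hV, show (0 : ℤ) = n i - n i by ring, OO_shift]
      have := hC i i
      rw [if_pos rfl] at this
      exact this
    · exact OO_mono (by norm_num) (hVij i j hij)
  have hdet : V.det.orderTop = (0 : ℤ) := exists_inv V hV0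
    (fun i => OO_coeff (hV0 i i) (by simpa using hV1 i)) (fun i j hij => hVij i j hij 0 (by norm_num))
  have hdet0 : V.det ≠ 0 := by
    intro h
    rw [h] at hdet
    simp at hdet
  have hsurj : Function.Surjective P.mulVec := by
    intro c
    let w := D.mulVec (g.mulVec fun k => polyK Fq (c k))
    choose p hp using fun i => exists_poly_approx (V⁻¹.mulVec w i)
    refine ⟨p, ?_⟩
    symm
    rw [← sub_eq_zero]
    apply hn
    intro i
    rw [← OO_shift (n i)]
    have e1 : (fun j => polyK Fq ((c - P.mulVec p) j)) = (fun j => polyK Fq (c j)) -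
        ((polyK Fq).mapMatrix P).mulVec fun j => polyK Fq (p j) := by
      ext1 j
      simp only [Pi.sub_apply, map_sub]
      congr 1
      exact RingHom.map_mulVec (polyK Fq) P p j
    have e2 : HahnSeries.single (-n i) 1 * g.mulVec (fun j => polyK Fq ((c - P.mulVec p) j)) i =
        V.mulVec (fun i => V⁻¹.mulVec w i - polyK Fq (p i)) i := by
      have : (fun i => V⁻¹.mulVec w i - polyK Fq (p i)) =
        V⁻¹.mulVec w - fun i => polyK Fq (p i) := rfl
      rw [this, Matrix.mulVec_sub, Matrix.mulVec_mulVec,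
        Matrix.mul_nonsing_inv _ (isUnit_iff_ne_zero.2 hdet0), Matrix.one_mulVec, e1]
      have : HahnSeries.single (-n i) 1 * g.mulVec ((fun j => polyK Fq (c j)) -
        ((polyK Fq).mapMatrix P).mulVec fun j => polyK Fq (p j)) i = D.mulVec (g.mulVec ((fun j => polyK Fq (c j)) -
        ((polyK Fq).mapMatrix P).mulVec fun j => polyK Fq (p j))) i := by
        simp only [D, Matrix.mulVec_diagonal]
      rw [this, Matrix.mulVec_sub, Matrix.mulVec_sub]
      simp only [V, w, Matrix.mulVec_mulVec]
    rw [e2]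
    have := OO_mulVec hV0 hp i
    simpa using this
  have hPu : IsUnit P.det := (Matrix.isUnit_iff_isUnit_det P).1 (Matrix.mulVec_surjective_iff_isUnit.1 hsurj)
  obtain ⟨r, hr, hrP⟩ := Polynomial.isUnit_iff.1 hPu
  have hdetP : (polyK Fq P.det).orderTop = (0 : ℤ) := by
    rw [← hrP]
    change (Polynomial.aeval (Kx Fq) (Polynomial.C r)).orderTop = _
    rw [Polynomial.aeval_C, algK, HahnSeries.C_apply, HahnSeries.orderTop_single hr.ne_zero]
  have hsum : ∑ i, n i = 0 := by
    have hh : V.det.orderTop = ((-∑ i, n i : ℤ) : WithTop ℤ) + ((0 : ℤ) + (0 : ℤ)) := by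
      simp only [V, D]
      rw [Matrix.det_mul, Matrix.det_mul, Matrix.det_diagonal, orderTop_single_prod,
        ← RingHom.map_det, HahnSeries.orderTop_mul, HahnSeries.orderTop_mul, hgo, hdetP,
        HahnSeries.orderTop_single one_ne_zero]
    rw [hdet] at hh
    norm_cast at hh
    omega
  exact ⟨n, hn, hsum, P, V, hdet0, hV0, hV1, hV⟩

lemma vnorm_eq_one {d : ℕ} {v : Fin d → Kt Fq} (h : ∀ i, OO 0 (v i)) (i : Fin d)
    (hi : ¬ OO 1 (v i)) : vnorm Fq v = 1 := by
  have : Nonempty (Fin d) := ⟨i⟩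
  apply le_antisymm
  · exact ciSup_le fun i => Kabs_le_iff_s11.2 (h i)
  · refine le_trans (not_lt.1 fun h' => hi (Kabs_lt_iff.1 h')) (le_ciSup (f := fun i => Kabs Fq (v i)) (Set.finite_range _).bddAbove i)

lemma OO_of_vnorm_lt {d : ℕ} {v : Fin d → Kt Fq} (h : vnorm Fq v < 1) (i : Fin d) : OO 1 (v i) :=
  Kabs_lt_iff.1 (lt_of_le_of_lt (le_ciSup (f := fun i => Kabs Fq (v i)) (Set.finite_range _).bddAbove i) h)

end helpers

/-- Every `A`-orbit of unimodular lattices contains a well rounded lattice: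
there is a diagonal matrix `a = diag(a₁,…,a_d)` with `a₁⋯a_d = 1` such that `aΛ` is
well rounded. -/
theorem A_orbit_meets_wellRounded {d : ℕ} (hd : 2 ≤ d)
    (g : Matrix (Fin d) (Fin d) (Kt Fq)) (hg : Kabs Fq g.det = 1) :
    ∃ a : Fin d → Kt Fq, (∀ i, a i ≠ 0) ∧ ∏ i, a i = 1 ∧
      IsWellRounded Fq ((fun v i => a i * v i) '' lattice Fq g) := by
  obtain ⟨n, hn, hsum, P, V, hdet, hV0, hV1, hV⟩ := core g hg
  have hcol : ∀ j, (fun i => V i j) ∈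
      (fun v i => (HahnSeries.single (-n i) 1 : Kt Fq) * v i) '' lattice Fq g := fun j =>
    ⟨_, ⟨fun k => P k j, rfl⟩, by ext1 i; exact (hV i j).symm⟩
  have hnorm : ∀ j, vnorm Fq (fun i => V i j) = 1 := fun j =>
    vnorm_eq_one (fun i => hV0 i j) j (hV1 j)
  have hlin : LinearIndependent (Kt Fq) (fun j i => V i j) :=
    Matrix.linearIndependent_cols_iff_isUnit.2
      ((Matrix.isUnit_iff_isUnit_det V).2 (isUnit_iff_ne_zero.2 hdet))
  refine ⟨fun i => HahnSeries.single (-n i) 1, fun i => ?_, ?_, fun j i => V i j, hcol, hlin, ?_⟩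
  · simp
  · rw [orderTop_single_prod, hsum]; simp
  · intro j
    rw [hnorm j]
    symm
    have hmem : (1 : ℝ) ∈ {r : ℝ | ∃ v ∈ (fun v i => (HahnSeries.single (-n i) 1 : Kt Fq) * v i) ''
        lattice Fq g, v ≠ 0 ∧ vnorm Fq v = r} := ⟨_, hcol j, hlin.ne_zero j, hnorm j⟩
    refine IsLeast.csInf_eq ⟨hmem, ?_⟩
    rintro r ⟨v, ⟨u, ⟨c, rfl⟩, rfl⟩, hv0, rfl⟩
    by_contra hlt
    push Not at hlt
    apply hv0
    have hc : c = 0 := by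
      apply hn
      intro i
      have := OO_of_vnorm_lt hlt i
      rw [← OO_shift (n i)]
      simpa using this
    ext1 i
    subst hc
    have : (fun j => polyK Fq ((0 : Fin d → Polynomial Fq) j)) = 0 := by
      ext1 j; simp
    change HahnSeries.single (-n i) 1 * g.mulVec _ i = 0
    rw [this, Matrix.mulVec_zero]
    simp
end
end
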